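/- Let g be a continuous complex-valued function on the closed unit disk, and let f ∈ C²(𝔻)∩C(𝕋) satisfy Δf = g on 𝔻, f(0) = 0, J_f(0) = 1, sup_{z∈𝔻}|g(z)| ≤ M₁ and sup_{z∈𝔻}|f(z)| ≤ M₂, where M₁ ≥ 0 and M₂ > 0 are constants. Let r₀ ∈ (0,1) be the (unique) solution of 1/((4/π)M₂ + (2/3)M₁) − (4M₂/π)·r₀(2−r₀)/(1−r₀)² − 2M₁·[log(4(1+r₀)) − log r₀]·(2+r₀)r₀ = 0. Then f is injective on the disk 𝔻_{r₀} = {z : |z| < r₀}, and the image f(𝔻_{r₀}) contains a disk centered at f(0) = 0 of radius R₀ with R₀ ≥ (2M₂/π)·r₀²(2−r₀)/(1−r₀)². -/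

import Mathlib

open Metric MeasureTheory Set Filter

noncomputable section

/-- The Wirtinger derivative `∂f/∂z = (f_x - i f_y)/2`. -/
def wdz (f : ℂ → ℂ) (z : ℂ) : ℂ :=
  (fderiv ℝ f z 1 - Complex.I * fderiv ℝ f z Complex.I) / 2

/-- The Wirtinger derivative `∂f/∂z̄ = (f_x + i f_y)/2`. -/
def wdzbar (f : ℂ → ℂ) (z : ℂ) : ℂ :=
  (fderiv ℝ f z 1 + Complex.I * fderiv ℝ f z Complex.I) / 2

/-- The Laplacian `Δf = f_xx + f_yy` (equivalently `4 f_{z z̄}`). -/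
def lap (f : ℂ → ℂ) (z : ℂ) : ℂ :=
  fderiv ℝ (fun w => fderiv ℝ f w 1) z 1 +
    fderiv ℝ (fun w => fderiv ℝ f w Complex.I) z Complex.I

/-- The Poisson integral `P_ψ(z) = (1/2π) ∫₀^{2π} ((1-|z|²)/|1-z e^{-it}|²) ψ(e^{it}) dt`. -/
def poissonIntegral (ψ : ℂ → ℂ) (z : ℂ) : ℂ :=
  (1 / (2 * Real.pi) : ℝ) • ∫ t in (0:ℝ)..(2 * Real.pi),
    (((1 - ‖z‖ ^ 2) / ‖1 - z * Complex.exp (-(Complex.I * (t : ℂ)))‖ ^ 2 : ℝ) : ℂ) *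
      ψ (Complex.exp (Complex.I * (t : ℂ)))

/-- The Green potential `G_g(z) = (1/2π) ∫_𝔻 log|(1 - z w̄)/(z - w)| g(w) dA(w)`. -/
def greenPotential (g : ℂ → ℂ) (z : ℂ) : ℂ :=
  (1 / (2 * Real.pi) : ℝ) • ∫ w in ball (0:ℂ) 1,
    ((Real.log ‖(1 - z * (starRingEnd ℂ) w) / (z - w)‖ : ℝ) : ℂ) * g w

/-- `sup_{z ∈ 𝔻} |g(z)|`. -/
def supD (g : ℂ → ℂ) : ℝ := sSup ((fun z => ‖g z‖) '' ball (0:ℂ) 1)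

/-- The function `μ(r)` with constant `c` in place of `‖g‖_∞`. -/
def mu (c r : ℝ) : ℝ :=
  c * (1 - r ^ 2) / (8 * r ^ 2) *
    ((1 + r ^ 2) / (1 - r ^ 2) - (1 - r ^ 2) / (2 * r) * Real.log ((1 + r) / (1 - r)))


lemma fd_diff {u : ℂ → ℂ} {z : ℂ} (h : ContDiffAt ℝ 2 u z) :
    DifferentiableAt ℝ (fderiv ℝ u) z :=
  (h.fderiv_right (m := 1) (by norm_num)).differentiableAt (by norm_num)

lemma c2_diff {u : ℂ → ℂ} {z : ℂ} (h : ContDiffAt ℝ 2 u z) : DifferentiableAt ℝ u z :=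
  h.differentiableAt (by norm_num)

lemma c2_ev {u : ℂ → ℂ} {z : ℂ} (h : ContDiffAt ℝ 2 u z) :
    ∀ᶠ w in nhds z, ContDiffAt ℝ 2 u w := h.eventually (by simp)

lemma fd_apply {u : ℂ → ℂ} {z : ℂ} (h : ContDiffAt ℝ 2 u z) (x y : ℂ) :
    fderiv ℝ (fun w => fderiv ℝ u w x) z y = fderiv ℝ (fderiv ℝ u) z y x := by
  have := ((fd_diff h).hasFDerivAt.clm_apply (hasFDerivAt_const x z)).fderiv
  rw [this]; simp

lemma lap_eq {u : ℂ → ℂ} {z : ℂ} (h : ContDiffAt ℝ 2 u z) :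
    lap u z = fderiv ℝ (fderiv ℝ u) z 1 1 + fderiv ℝ (fderiv ℝ u) z Complex.I Complex.I := by
  rw [lap, fd_apply h, fd_apply h]

lemma lap_add {u v : ℂ → ℂ} {z : ℂ} (hu : ContDiffAt ℝ 2 u z) (hv : ContDiffAt ℝ 2 v z) :
    lap (fun w => u w + v w) z = lap u z + lap v z := by
  rw [lap_eq hu, lap_eq hv, lap_eq (hu.add hv)]
  have : fderiv ℝ (fun w => u w + v w) =ᶠ[nhds z] fun w => fderiv ℝ u w + fderiv ℝ v w := by
    filter_upwards [c2_ev hu, c2_ev hv] with w h1 h2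
    exact fderiv_fun_add (c2_diff h1) (c2_diff h2)
  rw [this.fderiv_eq, fderiv_fun_add (fd_diff hu) (fd_diff hv)]
  simp; ring

lemma lap_cmul {u : ℂ → ℂ} {z : ℂ} (c : ℂ) (hu : ContDiffAt ℝ 2 u z) :
    lap (fun w => c * u w) z = c * lap u z := by
  rw [lap_eq hu, lap_eq (contDiffAt_const.mul hu)]
  have : fderiv ℝ (fun w => c * u w) =ᶠ[nhds z] fun w => c • fderiv ℝ u w := by
    filter_upwards [c2_ev hu] with w h1
    exact fderiv_const_mul (c2_diff h1) c
  rw [this.fderiv_eq, fderiv_fun_const_smul (fd_diff hu)]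
  simp; ring

lemma lap_sub {u v : ℂ → ℂ} {z : ℂ} (hu : ContDiffAt ℝ 2 u z) (hv : ContDiffAt ℝ 2 v z) :
    lap (fun w => u w - v w) z = lap u z - lap v z := by
  have := lap_add hu (contDiffAt_const.mul hv : ContDiffAt ℝ 2 (fun w => (-1:ℂ) * v w) z)
  rw [lap_cmul _ hv] at this
  simpa [sub_eq_add_neg] using this

lemma lap_comp (L : ℂ →L[ℝ] ℂ) (a : ℂ) {u : ℂ → ℂ} {z : ℂ} (hu : ContDiffAt ℝ 2 u (a + L z)) :
    ContDiffAt ℝ 2 (fun w => u (a + L w)) z ∧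
    fderiv ℝ (fun w => u (a + L w)) z = (fderiv ℝ u (a + L z)).comp L ∧
    lap (fun w => u (a + L w)) z =
     fderiv ℝ (fderiv ℝ u) (a + L z) (L 1) (L 1)
      + fderiv ℝ (fderiv ℝ u) (a + L z) (L Complex.I) (L Complex.I) := by
  have hA : ∀ w, HasFDerivAt (fun w => a + L w) L w := fun w => L.hasFDerivAt.const_add a
  have hc : ContDiffAt ℝ 2 (fun w => u (a + L w)) z :=
    ContDiffAt.comp z hu (contDiffAt_const.add L.contDiff.contDiffAt)
  have h1 : ∀ w, DifferentiableAt ℝ u (a + L w) →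
      fderiv ℝ (fun w => u (a + L w)) w = (fderiv ℝ u (a + L w)).comp L := fun w hw =>
    (HasFDerivAt.comp w hw.hasFDerivAt (hA w)).fderiv
  refine ⟨hc, h1 z (c2_diff hu), ?_⟩
  have key : ∀ x, fderiv ℝ (fun w => fderiv ℝ (fun w => u (a + L w)) w x) z x
      = fderiv ℝ (fderiv ℝ u) (a + L z) (L x) (L x) := by
    intro x
    have ev : (fun w => fderiv ℝ (fun w => u (a + L w)) w x) =ᶠ[nhds z]
        fun w => fderiv ℝ u (a + L w) (L x) := by
      have hcont : ContinuousAt (fun w => a + L w) z := (hA z).continuousAt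
      filter_upwards [hcont.eventually (c2_ev hu)] with w hw
      rw [h1 w (c2_diff hw)]; rfl
    rw [ev.fderiv_eq]
    have h2 : HasFDerivAt (fun w => fderiv ℝ u (a + L w)) _ z :=
      HasFDerivAt.comp z (fd_diff hu).hasFDerivAt (hA z)
    rw [(h2.clm_apply (hasFDerivAt_const (L x) z)).fderiv]
    simp
  rw [lap, key, key]

lemma bil_rot (B : ℂ →L[ℝ] ℂ →L[ℝ] ℂ) (l : ℂ) :
    B l l + B (l * Complex.I) (l * Complex.I) = (‖l‖^2 : ℝ) * (B 1 1 + B Complex.I Complex.I) := by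
  have hl : l = l.re • (1:ℂ) + l.im • Complex.I := by
    apply Complex.ext <;> simp
  have hlI : l * Complex.I = (-l.im) • (1:ℂ) + l.re • Complex.I := by
    apply Complex.ext <;> simp
  have hn : ‖l‖^2 = l.re^2 + l.im^2 := by
    rw [← Complex.normSq_eq_norm_sq, Complex.normSq_apply]; ring
  have key : ∀ a b : ℝ, B (a • (1:ℂ) + b • Complex.I) (a • (1:ℂ) + b • Complex.I) =
      a * a * B 1 1 + a * b * (B 1 Complex.I + B Complex.I 1) + b * b * B Complex.I Complex.I := by
    intro a b
    simp only [map_add, map_smul, add_apply, smul_apply, smul_add]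
    simp only [Complex.real_smul]
    ring
  have k1 := key l.re l.im
  have k2 := key (-l.im) l.re
  rw [← hl] at k1
  rw [← hlI] at k2
  rw [k1, k2, hn]
  push_cast
  ring

def mulL (l : ℂ) : ℂ →L[ℝ] ℂ := ContinuousLinearMap.mul ℝ ℂ l
@[simp] lemma mulL_apply (l z : ℂ) : mulL l z = l * z := rfl

lemma lap_aff (l a : ℂ) {u : ℂ → ℂ} {z : ℂ} (hu : ContDiffAt ℝ 2 u (a + l * z)) :
    ContDiffAt ℝ 2 (fun w => u (a + l * w)) z ∧
    (∀ e, fderiv ℝ (fun w => u (a + l * w)) z e = fderiv ℝ u (a + l * z) (l * e)) ∧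
    lap (fun w => u (a + l * w)) z = (‖l‖^2 : ℝ) * lap u (a + l * z) := by
  obtain ⟨h1, h2, h3⟩ := lap_comp (mulL l) a (z := z) hu
  simp only [mulL_apply] at h1 h2 h3
  refine ⟨h1, fun e => by rw [h2]; rfl, ?_⟩
  rw [h3, lap_eq hu, ← bil_rot]; simp

lemma lap_conj {u : ℂ → ℂ} {z : ℂ} (hu : ContDiffAt ℝ 2 u (starRingEnd ℂ z)) :
    ContDiffAt ℝ 2 (fun w => u (starRingEnd ℂ w)) z ∧
    (∀ e, fderiv ℝ (fun w => u (starRingEnd ℂ w)) z e =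
      fderiv ℝ u (starRingEnd ℂ z) (starRingEnd ℂ e)) ∧
    lap (fun w => u (starRingEnd ℂ w)) z = lap u (starRingEnd ℂ z) := by
  have := lap_comp (Complex.conjCLE : ℂ →L[ℝ] ℂ) 0 (z := z) (u := u) (by simpa using hu)
  simp only [zero_add, ContinuousLinearEquiv.coe_coe, Complex.conjCLE_apply] at this
  obtain ⟨h1, h2, h3⟩ := this
  refine ⟨h1, fun e => by rw [h2]; rfl, ?_⟩
  rw [h3, lap_eq hu]; simp

/-- second derivative test -/
lemma sdt {w : ℂ → ℂ} {q : ℂ} (h : ContDiffAt ℝ 2 w q)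
    (hm : IsLocalMax (fun z => (w z).re) q) (e : ℂ) :
    (fderiv ℝ (fderiv ℝ w) q e e).re ≤ 0 := by
  by_contra! hpos
  set p : ℝ → ℂ := fun t => q + t * e with hp
  have hpd : ∀ t, HasDerivAt p e t := fun t => by
    have h1 : HasDerivAt (fun t : ℝ => (t : ℂ)) 1 t := Complex.ofRealCLM.hasDerivAt (x := t)
    have := (h1.mul_const e).const_add q
    rw [one_mul] at this
    exact this
  have hp0 : p 0 = q := by simp [hp]
  have hpc : Tendsto p (nhds 0) (nhds q) := by
    have := (hpd 0).continuousAt.tendsto; rwa [hp0] at this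
  set g : ℝ → ℝ := fun t => (w (p t)).re with hg
  have hgd : ∀ t, DifferentiableAt ℝ w (p t) → HasDerivAt g (fderiv ℝ w (p t) e).re t := by
    intro t ht
    have h1 : HasDerivAt (fun t => w (p t)) (fderiv ℝ w (p t) e) t :=
      ht.hasFDerivAt.comp_hasDerivAt t (hpd t)
    exact Complex.reCLM.hasFDerivAt.comp_hasDerivAt t h1
  have ev : deriv g =ᶠ[nhds 0] fun t => (fderiv ℝ w (p t) e).re := by
    filter_upwards [hpc.eventually (c2_ev h)] with t ht
    exact (hgd t (c2_diff ht)).deriv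
  have h2 : HasDerivAt (fun t => (fderiv ℝ w (p t) e).re) (fderiv ℝ (fderiv ℝ w) q e e).re 0 := by
    have h0 : HasFDerivAt (fderiv ℝ w) (fderiv ℝ (fderiv ℝ w) q) (p 0) := by
      rw [hp0]; exact (fd_diff h).hasFDerivAt
    have h1 := h0.comp_hasDerivAt 0 (hpd 0)
    have h3 := h1.clm_apply (hasDerivAt_const (0:ℝ) e)
    have h4 := Complex.reCLM.hasFDerivAt.comp_hasDerivAt 0 h3
    simpa using! h4
  have hdd : deriv (deriv g) 0 = (fderiv ℝ (fderiv ℝ w) q e e).re := by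
    rw [ev.deriv_eq, h2.deriv]
  have hgm : IsLocalMax g 0 := by
    have := hpc.eventually hm
    filter_upwards [this] with t ht
    simpa [hg, hp0] using ht
  have hgmin : IsLocalMin g 0 := isLocalMin_of_deriv_deriv_pos (by rw [hdd]; exact hpos)
    hgm.deriv_eq_zero (hgd 0 (by rw [hp0]; exact c2_diff h)).continuousAt
  have hconst : g =ᶠ[nhds 0] fun _ => g 0 := by
    filter_upwards [hgm, hgmin] with t h1 h2
    exact le_antisymm h1 h2
  have : deriv (deriv g) 0 = 0 := by
    have h5 := hconst.deriv
    rw [h5.deriv_eq]; simp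
  linarith

lemma lap_nsq (c : ℂ) (z : ℂ) : lap (fun w => c * ((‖w‖^2 : ℝ) : ℂ)) z = 4 * c := by
  have h0 : (fun w : ℂ => c * ((‖w‖^2 : ℝ) : ℂ)) = fun w => c * (w * starRingEnd ℂ w) := by
    funext w; rw [Complex.mul_conj, Complex.normSq_eq_norm_sq]
  have h1 : ∀ w x : ℂ, fderiv ℝ (fun w => c * (w * starRingEnd ℂ w)) w x
      = c * (w * starRingEnd ℂ x + x * starRingEnd ℂ w) := by
    intro w x
    have hc : HasFDerivAt (fun w : ℂ => starRingEnd ℂ w) (Complex.conjCLE : ℂ →L[ℝ] ℂ) w :=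
      (Complex.conjCLE : ℂ →L[ℝ] ℂ).hasFDerivAt
    have := (((hasFDerivAt_id (𝕜 := ℝ) w).mul hc).const_mul c).fderiv
    change fderiv ℝ (fun w => c * (w * starRingEnd ℂ w)) w = _ at this
    rw [this]
    simp; ring
  have h2 : ∀ x : ℂ, fderiv ℝ (fun w : ℂ => c * (w * starRingEnd ℂ x + x * starRingEnd ℂ w)) z x
      = 2 * c * (x * starRingEnd ℂ x) := by
    intro x
    have hc : HasFDerivAt (fun w : ℂ => starRingEnd ℂ w) (Complex.conjCLE : ℂ →L[ℝ] ℂ) z :=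
      (Complex.conjCLE : ℂ →L[ℝ] ℂ).hasFDerivAt
    have := ((((hasFDerivAt_id (𝕜 := ℝ) z).mul_const (starRingEnd ℂ x)).add
      (hc.const_mul x)).const_mul c).fderiv
    change fderiv ℝ (fun w : ℂ => c * (w * starRingEnd ℂ x + x * starRingEnd ℂ w)) z = _ at this
    rw [this]
    simp; ring
  rw [h0, lap]
  simp only [h1]
  rw [h2, h2]; simp; ring

lemma c2_nsq (c : ℂ) (z : ℂ) : ContDiffAt ℝ 2 (fun w : ℂ => c * ((‖w‖^2 : ℝ) : ℂ)) z := by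
  apply contDiffAt_const.mul
  exact (Complex.ofRealCLM.contDiff.comp (contDiff_norm_sq ℝ)).contDiffAt

lemma maxp {K U : Set ℂ} (hK : IsCompact K) (hU : IsOpen U) (hUK : U ⊆ K)
    (hK1 : K ⊆ closedBall 0 1) {w : ℂ → ℂ} (hc : ContinuousOn w K)
    (h2 : ∀ z ∈ U, ContDiffAt ℝ 2 w z) (hl : ∀ z ∈ U, 0 ≤ (lap w z).re)
    (hb : ∀ z ∈ K, z ∉ U → (w z).re ≤ 0) : ∀ z ∈ K, (w z).re ≤ 0 := by
  intro p hp
  by_contra! hpos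
  set δ := (w p).re / 2 with hδ
  have hδ0 : 0 < δ := by positivity
  set v : ℂ → ℂ := fun z => w z + (δ:ℂ) * ((‖z‖^2 : ℝ) : ℂ) with hv
  have hvre : ∀ z, (v z).re = (w z).re + δ * ‖z‖^2 := by intro z; simp only [hv, Complex.add_re, Complex.re_ofReal_mul, Complex.ofReal_re]
  have hvc : ContinuousOn (fun z => (v z).re) K := by
    apply Complex.continuous_re.comp_continuousOn
    apply hc.add
    fun_prop
  obtain ⟨q, hq, hqm⟩ := hK.exists_isMaxOn ⟨p, hp⟩ hvc
  have hqU : q ∈ U := by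
    by_contra hn
    have h1 := hb q hq hn
    have h3 := hqm hp
    simp only [mem_ofPred_eq, hvre] at h3
    have h4 : ‖q‖ ≤ 1 := by simpa using hK1 hq
    nlinarith [norm_nonneg q, norm_nonneg p, sq_nonneg ‖p‖, pow_le_one₀ (n := 2) (norm_nonneg q) h4]
  have hloc : IsLocalMax (fun z => (v z).re) q := by
    apply hqm.isLocalMax
    exact mem_of_superset (hU.mem_nhds hqU) hUK
  have hvC : ContDiffAt ℝ 2 v q := (h2 q hqU).add (c2_nsq _ _)
  have h5 : (lap v q).re ≤ 0 := by
    rw [lap_eq hvC, Complex.add_re]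
    have := sdt hvC hloc 1
    have := sdt hvC hloc Complex.I
    linarith
  have h6 : lap v q = lap w q + 4 * δ := by
    rw [← lap_nsq]; exact lap_add (h2 q hqU) (c2_nsq _ _)
  rw [h6] at h5
  have := hl q hqU
  simp at h5
  linarith


/-- Continuous on the closed disk and twice continuously differentiable inside. -/
def Good (u : ℂ → ℂ) : Prop :=
  ContinuousOn u (closedBall 0 1) ∧ ∀ z ∈ ball (0:ℂ) 1, ContDiffAt ℝ 2 u z

lemma exists_unit (x : ℂ) : ∃ c : ℂ, ‖c‖ = 1 ∧ (c * x).re = ‖x‖ := by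
  by_cases hx : x = 0
  · exact ⟨1, by simp, by simp [hx]⟩
  · refine ⟨starRingEnd ℂ x / ‖x‖, ?_, ?_⟩
    · simp [hx]
    · rw [div_mul_eq_mul_div, mul_comm, Complex.mul_conj, Complex.normSq_eq_norm_sq,
        ← Complex.ofReal_div, Complex.ofReal_re]
      have : ‖x‖ ≠ 0 := by simpa using hx
      field_simp

lemma mp_bound {u : ℂ → ℂ} (hu : Good u) {M ε : ℝ}
    (hM : ∀ z ∈ ball (0:ℂ) 1, ‖lap u z‖ ≤ M) (hε : ∀ z ∈ sphere (0:ℂ) 1, ‖u z‖ ≤ ε) :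
    ∀ z ∈ closedBall (0:ℂ) 1, ‖u z‖ ≤ ε + M * (1 - ‖z‖^2) / 4 := by
  intro z hz
  obtain ⟨c, hc1, hc⟩ := exists_unit (u z)
  set w : ℂ → ℂ := fun z => c * u z + ((M/4 : ℝ) : ℂ) * ((‖z‖^2 : ℝ) : ℂ)
    + ((-(ε + M/4) : ℝ) : ℂ) with hw
  have hre : ∀ z, (w z).re = (c * u z).re + M/4 * ‖z‖^2 - (ε + M/4) := by
    intro z
    simp only [hw, Complex.add_re, Complex.re_ofReal_mul, Complex.ofReal_re]; ring
  have h := maxp (isCompact_closedBall (0:ℂ) 1) isOpen_ball ball_subset_closedBall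
    (le_refl _) (w := w)
    (by
      apply ContinuousOn.add _ continuousOn_const
      apply ContinuousOn.add (continuousOn_const.mul hu.1)
      fun_prop)
    (fun z hz => ((contDiffAt_const.mul (hu.2 z hz)).add (c2_nsq _ _)).add contDiffAt_const)
    (by
      intro z hz
      have h1 := hu.2 z hz
      have e1 : lap w z = lap (fun z => c * u z + ((M/4 : ℝ) : ℂ) * ((‖z‖^2 : ℝ) : ℂ)) z := by
        simp only [lap, hw, fderiv_add_const]
      rw [e1, lap_add (contDiffAt_const.mul h1) (c2_nsq _ _), lap_cmul _ h1, lap_nsq]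
      have h2 : ‖c * lap u z‖ ≤ M := by rw [norm_mul, hc1, one_mul]; exact hM z hz
      have h3 := (abs_le.1 (Complex.abs_re_le_norm (c * lap u z))).1
      rw [Complex.add_re]
      have : (4 * ((M/4 : ℝ) : ℂ)).re = M := by simp; ring
      rw [this]; linarith)
    (by
      intro z hz hn
      have hs : ‖z‖ = 1 := by
        simp at hz hn; linarith
      have h1 := hε z (by simpa using hs)
      have h2 := Complex.re_le_norm (c * u z)
      rw [norm_mul, hc1, one_mul] at h2
      rw [hre, hs]; linarith) z hz
  rw [hre, hc] at h
  linarith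

lemma grad_bound {u : ℂ → ℂ} (hu : Good u) {M ε : ℝ} (hε0 : 0 ≤ ε) (hM0 : 0 ≤ M)
    (hM : ∀ z ∈ ball (0:ℂ) 1, ‖lap u z‖ ≤ M) (hε : ∀ z ∈ sphere (0:ℂ) 1, ‖u z‖ ≤ ε) (e : ℂ) :
    ‖fderiv ℝ u 0 e‖ ≤ (M / 2 + 3 * ε) * ‖e‖ := by
  suffices H : ∀ e : ℂ, ‖e‖ = 1 → ‖fderiv ℝ u 0 e‖ ≤ (M / 2 + 3 * ε) by
    by_cases he : e = 0
    · simp [he]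
    have hne : ‖e‖ ≠ 0 := by simpa using he
    have h1 := H ((‖e‖⁻¹ : ℝ) • e) (by rw [norm_smul]; simp [hne])
    rw [map_smul, norm_smul] at h1
    have : ‖(‖e‖⁻¹ : ℝ)‖ = ‖e‖⁻¹ := by simp
    rw [this, inv_mul_le_iff₀ (by positivity)] at h1
    linarith
  clear e
  intro e he
  obtain ⟨c, hc1, hc⟩ := exists_unit (fderiv ℝ u 0 e)
  set l : ℂ := e * (-Complex.I) with hl
  have hl1 : ‖l‖ = 1 := by simp [hl, he]
  have hlI : l * Complex.I = e := by rw [hl, mul_assoc]; simp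
  -- the rotated function
  set v : ℂ → ℂ := fun z => u (0 + l * z) with hv
  have hlb : ∀ z ∈ ball (0:ℂ) 1, 0 + l * z ∈ ball (0:ℂ) 1 := by
    intro z hz; simpa [hl1] using hz
  have hcb : ∀ z : ℂ, z ∈ ball (0:ℂ) 1 → starRingEnd ℂ z ∈ ball (0:ℂ) 1 := by
    intro z hz; simpa using hz
  have hvA := fun z (hz : z ∈ ball (0:ℂ) 1) => lap_aff l 0 (hu.2 _ (hlb z hz))
  have hvC : ∀ z ∈ ball (0:ℂ) 1, ContDiffAt ℝ 2 v z := fun z hz => (hvA z hz).1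
  have hvl : ∀ z ∈ ball (0:ℂ) 1, ‖lap v z‖ ≤ M := by
    intro z hz
    have := (hvA z hz).2.2
    rw [show lap v z = _ from this, hl1]
    simpa using hM _ (hlb z hz)
  have hvc : ContinuousOn v (closedBall 0 1) := by
    apply hu.1.comp (by fun_prop)
    intro z hz; simpa [hl1] using hz
  have hvs : ∀ z ∈ sphere (0:ℂ) 1, ‖v z‖ ≤ ε := by
    intro z hz; apply hε; simpa [hl1] using hz
  have h0 : (0:ℂ) ∈ ball (0:ℂ) 1 := by simp
  have hvI : fderiv ℝ v 0 Complex.I = fderiv ℝ u 0 e := by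
    have := (hvA 0 h0).2.1 Complex.I
    rw [show fderiv ℝ v 0 Complex.I = _ from this, hlI]; simp
  -- reflected difference
  set K : Set ℂ := closedBall 0 1 ∩ {z | 0 ≤ z.im} with hK
  set U : Set ℂ := ball 0 1 ∩ {z | 0 < z.im} with hU
  -- barrier `M/2 (y - y²) + ε (x² - y² + 3 y)`
  set B : ℂ → ℂ := fun z => (((M/2 + 3 * ε) * z.im - M/2 * z.im^2 + ε * (z.re^2 - z.im^2) : ℝ) : ℂ)
    with hB
  have hreD : ∀ z, HasFDerivAt (fun z : ℂ => z.re) Complex.reCLM z :=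
    fun z => Complex.reCLM.hasFDerivAt
  have himD : ∀ z, HasFDerivAt (fun z : ℂ => z.im) Complex.imCLM z :=
    fun z => Complex.imCLM.hasFDerivAt
  have hBc : ContDiff ℝ 2 B := by
    have h1 : ContDiff ℝ 2 (fun z : ℂ => z.re) := Complex.reCLM.contDiff
    have h2 : ContDiff ℝ 2 (fun z : ℂ => z.im) := Complex.imCLM.contDiff
    have h3 : ContDiff ℝ 2 (fun z : ℂ =>
        (M/2 + 3 * ε) * z.im - M/2 * z.im^2 + ε * (z.re^2 - z.im^2)) := by fun_prop
    exact Complex.ofRealCLM.contDiff.comp h3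
  have hBd : ∀ z x, fderiv ℝ B z x = (((M/2 + 3 * ε) * x.im - M * z.im * x.im
      + ε * (2 * z.re * x.re - 2 * z.im * x.im) : ℝ) : ℂ) := by
    intro z x
    have h1 := ((((himD z).const_mul (M/2+3*ε)).sub (((himD z).pow 2).const_mul (M/2))).add
      ((((hreD z).pow 2).sub ((himD z).pow 2)).const_mul ε))
    have h2 := (Complex.ofRealCLM.hasFDerivAt.comp z h1).fderiv
    change fderiv ℝ B z = _ at h2
    rw [h2]
    simp
    ring
  have hBl : ∀ z, lap B z = ((-M : ℝ) : ℂ) := by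
    intro z
    have h1 : ∀ x y, fderiv ℝ (fun z => fderiv ℝ B z x) z y =
        ((- M * y.im * x.im + ε * (2 * y.re * x.re - 2 * y.im * x.im) : ℝ) : ℂ) := by
      intro x y
      simp only [hBd]
      have h1 := ((((himD z).const_mul M).mul_const x.im).const_sub ((M/2 + 3 * ε) * x.im)).add
        (((((hreD z).const_mul 2).mul_const x.re).sub
          (((himD z).const_mul 2).mul_const x.im)).const_mul ε)
      have h2 := (Complex.ofRealCLM.hasFDerivAt.comp z h1).fderiv
      change fderiv ℝ (fun z : ℂ => (((M/2 + 3 * ε) * x.im - M * z.im * x.im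
        + ε * (2 * z.re * x.re - 2 * z.im * x.im) : ℝ) : ℂ)) z = _ at h2
      rw [h2]
      simp
      ring
    rw [lap, h1, h1]
    simp
  set w : ℂ → ℂ := fun z => (c / 2) * (v z - v (starRingEnd ℂ z)) - B z with hw
  have hC := fun z (hz : z ∈ ball (0:ℂ) 1) => lap_conj (hvC _ (hcb z hz))
  have hd2 : ∀ z ∈ ball (0:ℂ) 1, ContDiffAt ℝ 2 (fun z => v z - v (starRingEnd ℂ z)) z :=
    fun z hz => (hvC z hz).sub (hC z hz).1
  have hbdn : ∀ (x y : ℂ) (N : ℝ), ‖x‖ ≤ N → ‖y‖ ≤ N → ‖c / 2 * (x - y)‖ ≤ N := by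
    intro x y N hx hy
    rw [norm_mul, norm_div, hc1]
    have := norm_sub_le x y
    have h2 : ‖(2:ℂ)‖ = 2 := by simp
    rw [h2]; linarith
  have hmax := maxp (K := K) (U := U) (w := w)
    ((isCompact_closedBall (0:ℂ) 1).inter_right (isClosed_le continuous_const Complex.continuous_im))
    (isOpen_ball.inter (isOpen_lt continuous_const Complex.continuous_im))
    (fun z hz => ⟨ball_subset_closedBall hz.1, le_of_lt (show 0 < z.im from hz.2)⟩) inter_subset_left
    (by
      apply ContinuousOn.sub _ hBc.continuous.continuousOn
      apply continuousOn_const.mul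
      apply ContinuousOn.sub (hvc.mono inter_subset_left)
      apply hvc.comp Complex.continuous_conj.continuousOn
      intro z hz; simpa using hz.1)
    (fun z hz => (contDiffAt_const.mul (hd2 z hz.1)).sub hBc.contDiffAt)
    (by
      intro z hz
      rw [hw, lap_sub (contDiffAt_const.mul (hd2 z hz.1)) hBc.contDiffAt,
        lap_cmul _ (hd2 z hz.1), lap_sub (hvC z hz.1) (hC z hz.1).1, (hC z hz.1).2.2, hBl]
      have h1 := hbdn _ _ M (hvl z hz.1) (hvl _ (hcb z hz.1))
      have h3 := (abs_le.1 ((Complex.abs_re_le_norm _).trans h1)).1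
      rw [Complex.sub_re, Complex.ofReal_re]
      linarith)
    (by
      intro z hz hn
      simp only [hw, hB, Complex.sub_re, Complex.ofReal_re]
      have hz1 : ‖z‖ ≤ 1 := by simpa using hz.1
      have hz2 : 0 ≤ z.im := hz.2
      by_cases h : ‖z‖ = 1
      · have h1 := (Complex.re_le_norm _).trans (hbdn (v z) (v (starRingEnd ℂ z)) ε
          (hvs z (by simpa using h)) (hvs _ (by simpa using h)))
        have h4 : z.re^2 + z.im^2 = 1 := by
          have : ‖z‖^2 = z.re^2 + z.im^2 := by
            rw [← Complex.normSq_eq_norm_sq, Complex.normSq_apply]; ring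
          rw [← this, h]; norm_num
        have h5 : z.im ≤ 1 := by nlinarith [sq_nonneg z.re]
        have h6 : 0 ≤ M * (z.im * (1 - z.im)) := by
          have : 0 ≤ 1 - z.im := by linarith
          positivity
        have h7 : 0 ≤ ε * (z.im * (1 - z.im)) := by
          have : 0 ≤ 1 - z.im := by linarith
          positivity
        have h8 : z.re^2 = 1 - z.im^2 := by linarith
        rw [h8]
        have h9 : 0 ≤ ε * z.im := by positivity
        nlinarith
      · have h1 : z.im = 0 := by
          by_contra h2
          exact hn ⟨by simpa using lt_of_le_of_ne hz1 h, lt_of_le_of_ne hz2 (Ne.symm h2)⟩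
        have h2 : starRingEnd ℂ z = z := Complex.conj_eq_iff_im.2 h1
        rw [h2, h1]
        simp
        positivity)
  -- derivative at 0 in direction I
  have hwd : HasDerivAt (fun t : ℝ => (w (t * Complex.I)).re)
      (‖fderiv ℝ u 0 e‖ - (M/2 + 3 * ε)) 0 := by
    have hp : HasDerivAt (fun t : ℝ => (t:ℂ) * Complex.I) Complex.I 0 := by
      have h1 : HasDerivAt (fun t : ℝ => (t : ℂ)) 1 0 := Complex.ofRealCLM.hasDerivAt (x := 0)
      simpa using! h1.mul_const Complex.I
    have hz0 : ((0:ℝ):ℂ) * Complex.I = 0 := by simp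
    have h1 : HasFDerivAt v (fderiv ℝ v 0) (((0:ℝ):ℂ) * Complex.I) := by
      rw [hz0]; exact (c2_diff (hvC 0 h0)).hasFDerivAt
    have h2 : HasFDerivAt (fun z => v (starRingEnd ℂ z))
        (fderiv ℝ (fun z => v (starRingEnd ℂ z)) 0) (((0:ℝ):ℂ) * Complex.I) := by
      rw [hz0]; exact (c2_diff (hC 0 h0).1).hasFDerivAt
    have h3 : HasFDerivAt B (fderiv ℝ B 0) (((0:ℝ):ℂ) * Complex.I) := by
      rw [hz0]; exact (hBc.contDiffAt.differentiableAt (by norm_num)).hasFDerivAt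
    have h4 := (((h1.sub h2).const_mul (c/2)).sub h3).comp_hasDerivAt 0 hp
    have h5 := Complex.reCLM.hasFDerivAt.comp_hasDerivAt 0 h4
    convert! h5 using 1
    have h6 := (hC 0 h0).2.1 Complex.I
    simp only [map_zero] at h6
    simp only [Complex.reCLM_apply, sub_apply, smul_apply, h6, hBd, hvI,
      Complex.conj_I, map_neg, smul_eq_mul]
    rw [show c / 2 * (fderiv ℝ u 0 e - -fderiv ℝ u 0 e) = c * fderiv ℝ u 0 e by ring]
    rw [Complex.sub_re, hc]
    simp
  by_contra! hcon
  have h7 := hwd.tendsto_slope_zero_right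
  have h8 : ∀ᶠ t : ℝ in nhdsWithin 0 (Ioi 0),
      t⁻¹ • ((w (((0 + t : ℝ) : ℂ) * Complex.I)).re - (w (((0:ℝ):ℂ) * Complex.I)).re) ≤ 0 := by
    filter_upwards [Ioo_mem_nhdsGT (zero_lt_one)] with t ht
    have h9 := hmax ((t:ℂ) * Complex.I) ⟨by simp [abs_of_pos ht.1]; exact ht.2.le, by simp; exact ht.1.le⟩
    have h10 : (w (((0:ℝ):ℂ) * Complex.I)).re = 0 := by simp [hw, hB]
    rw [h10, zero_add, sub_zero, smul_eq_mul]
    exact mul_nonpos_of_nonneg_of_nonpos (inv_nonneg.2 ht.1.le) h9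
  have := le_of_tendsto h7 h8
  linarith


lemma approx_circle {ψ : ℂ → ℂ} (hψ : ContinuousOn ψ (sphere 0 1)) {ε : ℝ} (hε : 0 < ε) :
    ∃ F G : Polynomial ℂ, ∀ z ∈ sphere (0:ℂ) 1,
      ‖ψ z - (F.eval z + G.eval (starRingEnd ℂ z))‖ ≤ ε := by
  have : Fact (0 < 2 * Real.pi) := ⟨by positivity⟩
  set Ψ : C(AddCircle (2 * Real.pi), ℂ) :=
    ⟨fun x => ψ (AddCircle.toCircle x : ℂ), by
      apply hψ.comp_continuous
      · exact continuous_subtype_val.comp AddCircle.continuous_toCircle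
      · intro x; rw [mem_sphere_zero_iff_norm]; exact Circle.norm_coe _⟩ with hΨ
  have hmem : Ψ ∈ (Submodule.span ℂ (range (@fourier (2 * Real.pi)))).topologicalClosure := by
    rw [span_fourier_closure_eq_top]; trivial
  have hcl : Ψ ∈ closure ((Submodule.span ℂ (range (@fourier (2 * Real.pi))) :
    Submodule ℂ C(AddCircle (2 * Real.pi), ℂ)) : Set C(AddCircle (2 * Real.pi), ℂ)) := hmem
  obtain ⟨p, hp, hd⟩ := Metric.mem_closure_iff.1 hcl ε hε
  have hp' : ∃ F G : Polynomial ℂ, ∀ x : AddCircle (2 * Real.pi),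
      p x = F.eval (AddCircle.toCircle x : ℂ) +
        G.eval (starRingEnd ℂ (AddCircle.toCircle x : ℂ)) := by
    clear hd
    have hp2 : p ∈ Submodule.span ℂ (range (@fourier (2 * Real.pi))) := hp
    induction hp2 using Submodule.span_induction with
    | mem q hq =>
      obtain ⟨n, rfl⟩ := hq
      obtain ⟨m, rfl | rfl⟩ := n.eq_nat_or_neg
      · refine ⟨Polynomial.X ^ m, 0, fun x => ?_⟩
        simp [fourier_apply, AddCircle.toCircle_nsmul]
      · refine ⟨0, Polynomial.X ^ m, fun x => ?_⟩
        rw [fourier_neg]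
        simp [fourier_apply, AddCircle.toCircle_nsmul]
    | zero => exact ⟨0, 0, fun x => by simp⟩
    | add a b ha hb iha ihb =>
      obtain ⟨F, G, h⟩ := iha ha
      obtain ⟨F', G', h'⟩ := ihb hb
      exact ⟨F + F', G + G', fun x => by simp [h, h']; ring⟩
    | smul c a ha iha =>
      obtain ⟨F, G, h⟩ := iha ha
      exact ⟨Polynomial.C c * F, Polynomial.C c * G, fun x => by simp [h]; ring⟩
  obtain ⟨F, G, h⟩ := hp'
  refine ⟨F, G, fun z hz => ?_⟩
  obtain ⟨x, hx⟩ : ∃ x : AddCircle (2 * Real.pi), (AddCircle.toCircle x : ℂ) = z := by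
    refine ⟨((Complex.arg z : ℝ) : AddCircle (2 * Real.pi)), ?_⟩
    rw [AddCircle.toCircle_apply_mk, Circle.coe_exp]
    have := Complex.norm_mul_exp_arg_mul_I z
    rw [show ‖z‖ = 1 by simpa using hz] at this
    simpa using this
  have h1 := h x
  rw [hx] at h1
  rw [← h1, ← hx]
  have h2 := (ContinuousMap.dist_apply_le_dist (f := Ψ) (g := p) x).trans hd.le
  rwa [dist_eq_norm] at h2

lemma int_exp (k : ℤ) : ∫ t in (0:ℝ)..(2 * Real.pi), Complex.exp (k * (Complex.I * t)) =
    if k = 0 then 2 * (Real.pi:ℂ) else 0 := by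
  split_ifs with h
  · simp [h]
  · have : ∀ t : ℝ, (k:ℂ) * (Complex.I * t) = (k * Complex.I) * t := fun t => by ring
    simp only [this]
    rw [integral_exp_mul_complex (by simp [h])]
    have h1 : Complex.exp (k * Complex.I * ((2 * Real.pi : ℝ) : ℂ)) = 1 := by
      rw [← Complex.exp_int_mul_two_pi_mul_I k]; congr 1; push_cast; ring
    rw [h1]; simp

lemma int_poly (F : Polynomial ℂ) (s k : ℤ) :
    ∫ t in (0:ℝ)..(2 * Real.pi), F.eval (Complex.exp (s * (Complex.I * t))) *
      Complex.exp (k * (Complex.I * t)) =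
    F.sum fun m a => a * (if s * m + k = 0 then 2 * (Real.pi:ℂ) else 0) := by
  simp only [Polynomial.eval_eq_sum, Polynomial.sum_def, Finset.sum_mul]
  rw [intervalIntegral.integral_finsetSum]
  · apply Finset.sum_congr rfl
    intro m _
    rw [← int_exp, ← intervalIntegral.integral_const_mul]
    congr 1; funext t
    rw [← Complex.exp_nat_mul, mul_assoc, ← Complex.exp_add]
    congr 2; push_cast; ring
  · intro m _
    apply Continuous.intervalIntegrable; fun_prop

lemma abs_cos_int (n : ℕ) (hn : 1 ≤ n) (c : ℝ) :
    ∫ t in (0:ℝ)..(2 * Real.pi), |Real.cos (n * t + c)| = 4 := by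
  have hn0 : (n:ℝ) ≠ 0 := by positivity
  rw [intervalIntegral.integral_comp_mul_add (fun x => |Real.cos x|) hn0]
  have hper : Function.Periodic (fun x => |Real.cos x|) Real.pi := by
    intro x; simp [Real.cos_add_pi]
  have h1 := hper.intervalIntegral_add_zsmul_eq (2 * n) c
    (fun a b => Continuous.intervalIntegrable (by fun_prop) _ _)
  have e1 : c + ((2 * n : ℤ)) • Real.pi = n * (2 * Real.pi) + c := by
    simp; ring
  rw [e1] at h1
  have h2 := hper.intervalIntegral_add_eq c (-(Real.pi/2))
  have h3 : ∫ x in (-(Real.pi/2))..(-(Real.pi/2) + Real.pi), |Real.cos x| = 2 := by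
    rw [show -(Real.pi/2) + Real.pi = Real.pi/2 by ring]
    rw [intervalIntegral.integral_congr (g := Real.cos)]
    · rw [integral_cos]; simp; norm_num
    · intro x hx
      rw [uIcc_of_le (by linarith [Real.pi_pos])] at hx
      exact abs_of_nonneg (Real.cos_nonneg_of_mem_Icc hx)
  rw [mul_zero, zero_add, h1, h2, h3]
  simp
  field_simp
  norm_num

lemma coeff_bound (F G : Polynomial ℂ) {S : ℝ} 
    (hS : ∀ z ∈ sphere (0:ℂ) 1, ‖F.eval z + G.eval (starRingEnd ℂ z)‖ ≤ S) (n : ℕ) (hn : 1 ≤ n) :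
    ‖F.coeff n‖ + ‖G.coeff n‖ ≤ 4 / Real.pi * S := by
  set A := Complex.arg (F.coeff n)
  set B := Complex.arg (G.coeff n)
  have hA : Complex.exp (-A * Complex.I) * F.coeff n = ‖F.coeff n‖ := by
    conv_lhs => rw [← Complex.norm_mul_exp_arg_mul_I (F.coeff n)]
    rw [mul_left_comm, ← Complex.exp_add]; simp [A]
  have hB : Complex.exp (-B * Complex.I) * G.coeff n = ‖G.coeff n‖ := by
    conv_lhs => rw [← Complex.norm_mul_exp_arg_mul_I (G.coeff n)]
    rw [mul_left_comm, ← Complex.exp_add]; simp [B]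
  have coef : ∀ (F : Polynomial ℂ) (s k : ℤ), s ≠ 0 → k = - (s * n) →
      (F.sum fun m a => a * (if s * m + k = 0 then 2 * (Real.pi:ℂ) else 0)) = F.coeff n * (2 * Real.pi) := by
    intro F s k hs hk
    rw [Polynomial.sum_def, Finset.sum_eq_single n]
    · simp [hk]
    · intro b _ hb
      rw [if_neg, mul_zero]
      intro h
      apply hb
      have : s * ((b:ℤ) - n) = 0 := by rw [hk] at h; linarith
      rcases mul_eq_zero.1 this with h | h
      · exact absurd h hs
      · omega
    · intro h
      rw [Polynomial.notMem_support_iff.1 h, zero_mul]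
  have coef0 : ∀ (F : Polynomial ℂ) (s : ℤ), s = 1 ∨ s = -1 →
      (F.sum fun m a => a * (if s * m + s * n = 0 then 2 * (Real.pi:ℂ) else 0)) = 0 := by
    intro F s hs
    rw [Polynomial.sum_def]
    apply Finset.sum_eq_zero
    intro m _
    rw [if_neg, mul_zero]
    rcases hs with rfl | rfl <;> omega
  have i1 := (int_poly F 1 (-n)).trans (coef F 1 (-n) (by norm_num) (by ring))
  have i2 := (int_poly G (-1) (n)).trans (coef G (-1) n (by norm_num) (by ring))
  have i3 := int_poly F 1 n
  rw [show (n:ℤ) = 1 * n by ring, coef0 F 1 (by simp)] at i3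
  have i4 := int_poly G (-1) (-n)
  rw [show (-n:ℤ) = -1 * n by ring, coef0 G (-1) (by simp)] at i4
  set h : ℝ → ℂ := fun t => F.eval (Complex.exp (Complex.I * t)) +
    G.eval (Complex.exp (-(Complex.I * t))) with hh
  set κ : ℝ → ℂ := fun t => Complex.exp (-A * Complex.I) * Complex.exp (-n * (Complex.I * t)) +
    Complex.exp (-B * Complex.I) * Complex.exp (n * (Complex.I * t)) with hκ
  have hint : ∫ t in (0:ℝ)..(2 * Real.pi), h t * κ t =
      ((2 * Real.pi * (‖F.coeff n‖ + ‖G.coeff n‖) : ℝ) : ℂ) := by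
    have e : ∀ t : ℝ, h t * κ t =
      Complex.exp (-A * Complex.I) * (F.eval (Complex.exp ((1:ℤ) * (Complex.I * t))) *
        Complex.exp ((-n : ℤ) * (Complex.I * t))) +
      Complex.exp (-B * Complex.I) * (F.eval (Complex.exp ((1:ℤ) * (Complex.I * t))) *
        Complex.exp ((1 * n : ℤ) * (Complex.I * t))) +
      (Complex.exp (-A * Complex.I) * (G.eval (Complex.exp ((-1:ℤ) * (Complex.I * t))) *
        Complex.exp ((-1 * n : ℤ) * (Complex.I * t))) +
      Complex.exp (-B * Complex.I) * (G.eval (Complex.exp ((-1:ℤ) * (Complex.I * t))) *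
        Complex.exp ((n : ℤ) * (Complex.I * t)))) := by
      intro t
      simp only [hh, hκ]
      push_cast
      simp only [one_mul, neg_mul]
      ring
    simp only [e]
    rw [intervalIntegral.integral_add, intervalIntegral.integral_add,
      intervalIntegral.integral_add]
    · simp only [intervalIntegral.integral_const_mul]
      rw [i1, i2, i3, i4]
      push_cast
      linear_combination (2 * (Real.pi : ℂ)) * hA + (2 * (Real.pi : ℂ)) * hB
    all_goals (apply Continuous.intervalIntegrable; fun_prop)
  have hκn : ∀ t, ‖κ t‖ = 2 * |Real.cos (n * t + (A - B)/2)| := by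
    intro t
    have e : κ t = Complex.exp (((-(A+B)/2 : ℝ):ℂ) * Complex.I) *
        (2 * Complex.cos ((n * t + (A - B)/2 : ℝ) : ℂ)) := by
      rw [Complex.cos, mul_div_cancel₀ _ (two_ne_zero), mul_add, ← Complex.exp_add,
        ← Complex.exp_add]
      simp only [hκ]
      rw [← Complex.exp_add, ← Complex.exp_add, add_comm]
      congr 2 <;> (push_cast; ring)
    rw [e, norm_mul, Complex.norm_exp_ofReal_mul_I, one_mul, norm_mul, ← Complex.ofReal_cos,
      Complex.norm_real]
    simp
  have hle : ‖∫ t in (0:ℝ)..(2 * Real.pi), h t * κ t‖ ≤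
      ∫ t in (0:ℝ)..(2 * Real.pi), (S * 2) * |Real.cos (n * t + (A - B)/2)| := by
    apply intervalIntegral.norm_integral_le_of_norm_le (by positivity)
    · apply Eventually.of_forall
      intro t _
      rw [norm_mul, hκn, mul_assoc]
      gcongr
      have := hS (Complex.exp (Complex.I * t)) (by
        rw [mem_sphere_zero_iff_norm, mul_comm]; exact Complex.norm_exp_ofReal_mul_I t)
      rw [← Complex.exp_conj] at this
      simpa [hh] using this
    · apply Continuous.intervalIntegrable; fun_prop
  rw [hint, intervalIntegral.integral_const_mul, abs_cos_int n hn, Complex.norm_real,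
    Real.norm_of_nonneg (by positivity)] at hle
  rw [div_mul_eq_mul_div, le_div_iff₀ Real.pi_pos]
  linarith


def HH (r : ℝ) : ℝ := r * (2 - r) / (1 - r)^2

lemma sum_bound (N : ℕ) {r : ℝ} (h0 : 0 ≤ r) (h1 : r < 1) :
    ∑ n ∈ Finset.range N, ((n:ℝ) + 2) * r^(n+1) ≤ HH r := by
  have key : (∑ n ∈ Finset.range N, ((n:ℝ) + 2) * r^(n+1)) * (1-r)^2 =
      r * (2 - r) - r^(N+1) * ((N+2) - (N+1) * r) := by
    induction N with
    | zero => simp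
    | succ k ih => rw [Finset.sum_range_succ, add_mul, ih]; push_cast; ring
  have h2 : 0 < (1-r)^2 := by have : 0 < 1 - r := by linarith
                              positivity
  rw [HH, le_div_iff₀ h2, key]
  have : 0 ≤ r^(N+1) * (((N:ℝ)+2) - (N+1) * r) := by
    apply mul_nonneg (by positivity)
    have : (0:ℝ) ≤ N := by positivity
    nlinarith
  linarith

lemma poly_fd (F : Polynomial ℂ) (w x : ℂ) :
    fderiv ℝ (fun z => F.eval z) w x = F.derivative.eval w * x := by
  have h := ((F.hasDerivAt w).hasFDerivAt.restrictScalars ℝ).fderiv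
  rw [h]; simp [mul_comm]

lemma poly_c2 (F : Polynomial ℂ) (w : ℂ) : ContDiffAt ℝ 2 (fun z => F.eval z) w := by
  have : ContDiff ℂ 2 (fun z => F.eval z) := F.differentiable.contDiff
  exact (this.restrict_scalars ℝ).contDiffAt

lemma poly_lap (F : Polynomial ℂ) (w : ℂ) : lap (fun z => F.eval z) w = 0 := by
  have h1 : ∀ x, fderiv ℝ (fun z => F.derivative.eval z * x) w x =
      F.derivative.derivative.eval w * x * x := by
    intro x
    have h2 := (((F.derivative.hasDerivAt w).hasFDerivAt.restrictScalars ℝ).mul_const x).fderiv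
    rw [h2]; simp; ring
  simp only [lap, poly_fd]
  rw [h1, h1, mul_assoc _ Complex.I, Complex.I_mul_I]
  ring

lemma poly_deriv_diff (F : Polynomial ℂ) (N : ℕ) (hN : F.natDegree < N + 1) (z : ℂ) :
    ‖F.derivative.eval z - F.derivative.eval 0‖ ≤
      ∑ n ∈ Finset.range N, ((n:ℝ) + 2) * ‖z‖^(n+1) * ‖F.coeff (n+2)‖ := by
  have hd : F.derivative.natDegree < N + 1 := lt_of_le_of_lt (F.natDegree_derivative_le.trans (Nat.sub_le _ _)) hN
  rw [Polynomial.eval_eq_sum_range' hd, ← Polynomial.coeff_zero_eq_eval_zero, Finset.sum_range_succ']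
  simp only [pow_zero, mul_one, add_sub_cancel_right]
  refine (norm_sum_le _ _).trans (le_of_eq (Finset.sum_congr rfl fun n _ => ?_))
  rw [Polynomial.coeff_derivative, norm_mul, norm_mul, norm_pow]
  have : ‖(((n+1 : ℕ):ℂ) + 1)‖ = (n:ℝ) + 2 := by
    rw [show (((n+1 : ℕ):ℂ) + 1) = ((n + 2 : ℕ) : ℂ) by push_cast; ring, Complex.norm_natCast]
    push_cast; ring
  rw [this]; ring

lemma decomp {f : ℂ → ℂ} (hf : ContinuousOn f (sphere 0 1)) {S ε : ℝ} (hε : 0 < ε)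
    (hS : ∀ z ∈ sphere (0:ℂ) 1, ‖f z‖ ≤ S) :
    ∃ h : ℂ → ℂ, (∀ z, ContDiffAt ℝ 2 h z) ∧ (∀ z, lap h z = 0) ∧
      (∀ z ∈ sphere (0:ℂ) 1, ‖f z - h z‖ ≤ ε) ∧
      (∀ e, ‖fderiv ℝ h 0 e‖ ≤ 4 / Real.pi * (S + ε) * ‖e‖) ∧
      (∀ z ∈ ball (0:ℂ) 1, ∀ e, ‖fderiv ℝ h z e - fderiv ℝ h 0 e‖ ≤
        4 / Real.pi * (S + ε) * HH ‖z‖ * ‖e‖) := by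
  obtain ⟨F, G, hFG⟩ := approx_circle hf hε
  have hb : ∀ z ∈ sphere (0:ℂ) 1, ‖F.eval z + G.eval (starRingEnd ℂ z)‖ ≤ S + ε := by
    intro z hz
    have h1 := norm_sub_norm_le (F.eval z + G.eval (starRingEnd ℂ z)) (f z)
    rw [norm_sub_rev] at h1
    linarith [hFG z hz, hS z hz]
  have hcb := coeff_bound F G hb
  set C := 4 / Real.pi * (S + ε) with hC
  have hC0 : 0 ≤ C := le_trans (by positivity) (hcb 1 le_rfl)
  have hfd : ∀ z e, fderiv ℝ (fun z => F.eval z + G.eval (starRingEnd ℂ z)) z e =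
      F.derivative.eval z * e + G.derivative.eval (starRingEnd ℂ z) * starRingEnd ℂ e := by
    intro z e
    have hcc := lap_conj (poly_c2 G (starRingEnd ℂ z))
    rw [fderiv_fun_add (c2_diff (poly_c2 F z)) (c2_diff hcc.1), add_apply, poly_fd, hcc.2.1, poly_fd]
  refine ⟨fun z => F.eval z + G.eval (starRingEnd ℂ z), ?_, ?_, hFG, ?_, ?_⟩
  · intro z
    exact (poly_c2 F z).add (lap_conj (poly_c2 G (starRingEnd ℂ z))).1
  · intro z
    have hcc := lap_conj (poly_c2 G (starRingEnd ℂ z))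
    rw [lap_add (poly_c2 F z) hcc.1, hcc.2.2, poly_lap, poly_lap, add_zero]
  · intro e
    rw [hfd, map_zero, ← Polynomial.coeff_zero_eq_eval_zero, ← Polynomial.coeff_zero_eq_eval_zero,
      Polynomial.coeff_derivative, Polynomial.coeff_derivative]
    refine (norm_add_le _ _).trans ?_
    simp only [norm_mul, Complex.norm_conj]
    have := hcb 1 le_rfl
    simp
    rw [← add_mul]
    gcongr
  · intro z hz e
    have hz1 : ‖z‖ < 1 := by simpa using hz
    rw [hfd, hfd, map_zero]
    set N := max F.natDegree G.natDegree with hN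
    have h1 := poly_deriv_diff F N (by omega) z
    have h2 := poly_deriv_diff G N (by omega) (starRingEnd ℂ z)
    rw [Complex.norm_conj] at h2
    have h3 : (∑ n ∈ Finset.range N, ((n:ℝ) + 2) * ‖z‖^(n+1) * ‖F.coeff (n+2)‖) +
        (∑ n ∈ Finset.range N, ((n:ℝ) + 2) * ‖z‖^(n+1) * ‖G.coeff (n+2)‖) ≤ C * HH ‖z‖ := by
      rw [← Finset.sum_add_distrib]
      refine le_trans ?_ (mul_le_mul_of_nonneg_left (sum_bound N (norm_nonneg z) hz1) hC0)
      rw [Finset.mul_sum]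
      apply Finset.sum_le_sum
      intro n _
      rw [← mul_add, mul_comm]
      gcongr
      exact hcb (n+2) (by omega)
    have e1 : F.derivative.eval z * e + G.derivative.eval (starRingEnd ℂ z) * starRingEnd ℂ e -
      (F.derivative.eval 0 * e + G.derivative.eval 0 * starRingEnd ℂ e) =
      (F.derivative.eval z - F.derivative.eval 0) * e +
      (G.derivative.eval (starRingEnd ℂ z) - G.derivative.eval 0) * starRingEnd ℂ e := by ring
    rw [e1]
    refine (norm_add_le _ _).trans ?_
    simp only [norm_mul, Complex.norm_conj]
    rw [← add_mul]
    gcongr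
    linarith

/-- combination of the decomposition and the maximum principle -/
lemma decomp2 {f : ℂ → ℂ} (hf : Good f) {S M ε : ℝ} (hε : 0 < ε)
    (hS : ∀ z ∈ sphere (0:ℂ) 1, ‖f z‖ ≤ S) (hM : ∀ z ∈ ball (0:ℂ) 1, ‖lap f z‖ ≤ M) :
    ∃ h v : ℂ → ℂ, Good v ∧ (∀ z ∈ ball (0:ℂ) 1, ‖lap v z‖ ≤ M) ∧
      (∀ z ∈ sphere (0:ℂ) 1, ‖v z‖ ≤ ε) ∧
      (∀ z ∈ closedBall (0:ℂ) 1, ‖v z‖ ≤ ε + M * (1 - ‖z‖^2) / 4) ∧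
      (∀ z ∈ ball (0:ℂ) 1, ∀ e, fderiv ℝ f z e = fderiv ℝ h z e + fderiv ℝ v z e) ∧
      (∀ e, ‖fderiv ℝ h 0 e‖ ≤ 4 / Real.pi * (S + ε) * ‖e‖) ∧
      (∀ z ∈ ball (0:ℂ) 1, ∀ e, ‖fderiv ℝ h z e - fderiv ℝ h 0 e‖ ≤
        4 / Real.pi * (S + ε) * HH ‖z‖ * ‖e‖) := by
  obtain ⟨h, h1, h2, h3, h4, h5⟩ := decomp (hf.1.mono sphere_subset_closedBall) hε hS
  have hv : Good (fun z => f z - h z) :=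
    ⟨hf.1.sub fun z _ => (h1 z).continuousAt.continuousWithinAt, fun z hz => (hf.2 z hz).sub (h1 z)⟩
  have hl : ∀ z ∈ ball (0:ℂ) 1, ‖lap (fun z => f z - h z) z‖ ≤ M := by
    intro z hz
    rw [lap_sub (hf.2 z hz) (h1 z), h2, sub_zero]; exact hM z hz
  refine ⟨h, fun z => f z - h z, hv, hl, h3, mp_bound hv hl h3, ?_, h4, h5⟩
  intro z hz e
  rw [fderiv_fun_sub (c2_diff (hf.2 z hz)) (c2_diff (h1 z)), sub_apply]
  ring

lemma grad_G {f : ℂ → ℂ} (hf : Good f) {S M : ℝ} (hM0 : 0 ≤ M)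
    (hS : ∀ z ∈ sphere (0:ℂ) 1, ‖f z‖ ≤ S) (hM : ∀ z ∈ ball (0:ℂ) 1, ‖lap f z‖ ≤ M) (e : ℂ) :
    ‖fderiv ℝ f 0 e‖ ≤ (4 / Real.pi * S + M / 2) * ‖e‖ := by
  have key : ∀ ε : ℝ, 0 < ε → ‖fderiv ℝ f 0 e‖ ≤
      (4 / Real.pi * (S + ε) + (M / 2 + 3 * ε)) * ‖e‖ := by
    intro ε hε
    obtain ⟨h, v, h1, h2, h3, -, h5, h6, -⟩ := decomp2 hf hε hS hM
    rw [h5 0 (by simp)]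
    refine (norm_add_le _ _).trans ?_
    rw [add_mul]
    exact add_le_add (h6 e) (grad_bound h1 hε.le hM0 h2 h3 e)
  have ht : Tendsto (fun ε : ℝ => (4 / Real.pi * (S + ε) + (M / 2 + 3 * ε)) * ‖e‖)
      (nhdsWithin 0 (Ioi 0)) (nhds ((4 / Real.pi * S + M / 2) * ‖e‖)) := by
    have : Continuous (fun ε : ℝ => (4 / Real.pi * (S + ε) + (M / 2 + 3 * ε)) * ‖e‖) := by fun_prop
    have := this.tendsto 0
    simp only [add_zero, mul_zero] at this
    exact this.mono_left nhdsWithin_le_nhds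
  exact ge_of_tendsto ht (by filter_upwards [self_mem_nhdsWithin] with ε hε using key ε hε)

lemma grad_G_scaled {f : ℂ → ℂ} {a : ℂ} {d : ℝ} (hd : 0 < d)
    (hc : ContinuousOn f (closedBall a d)) (h2 : ∀ z ∈ ball a d, ContDiffAt ℝ 2 f z)
    {S M : ℝ} (hM0 : 0 ≤ M)
    (hS : ∀ z ∈ sphere a d, ‖f z‖ ≤ S) (hM : ∀ z ∈ ball a d, ‖lap f z‖ ≤ M) (e : ℂ) :
    ‖fderiv ℝ f a e‖ ≤ (4 / Real.pi * S / d + M * d / 2) * ‖e‖ := by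
  have hm : ∀ z : ℂ, dist (a + (d:ℂ) * z) a = d * ‖z‖ := by
    intro z; rw [dist_eq_norm]; simp [abs_of_pos hd]
  have hmb : ∀ z ∈ ball (0:ℂ) 1, a + (d:ℂ) * z ∈ ball a d := by
    intro z hz; rw [mem_ball, hm]; have : ‖z‖ < 1 := by simpa using hz
    nlinarith
  have hA := fun z hz => lap_aff (d:ℂ) a (h2 _ (hmb z hz))
  have hdn : ‖(d:ℂ)‖ = d := by simp [abs_of_pos hd]
  have hg : Good (fun z => f (a + (d:ℂ) * z)) := by
    refine ⟨hc.comp (by fun_prop) ?_, fun z hz => (hA z hz).1⟩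
    intro z hz; rw [mem_closedBall, hm]; have : ‖z‖ ≤ 1 := by simpa using hz
    nlinarith
  have := grad_G hg (S := S) (M := d^2 * M) (by positivity)
    (by intro z hz; apply hS; rw [mem_sphere, hm]; simp at hz; simp [hz])
    (by
      intro z hz
      rw [(hA z hz).2.2, norm_mul, hdn, Complex.norm_real, Real.norm_of_nonneg (by positivity)]
      exact mul_le_mul_of_nonneg_left (hM _ (hmb z hz)) (by positivity)) e
  rw [(hA 0 (by simp)).2.1, mul_zero, add_zero, ← Complex.real_smul, map_smul, norm_smul,
    Real.norm_of_nonneg hd.le, mul_comm, ← le_div_iff₀ hd] at this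
  refine this.trans (le_of_eq ?_)
  field_simp


lemma inv_pi_lt : 4 / Real.pi < 1.274 := by
  rw [div_lt_iff₀ Real.pi_pos]; linarith [Real.pi_gt_d2]

lemma log_base {r : ℝ} (h1 : 1/10 ≤ r) (h2 : r ≤ 1/2) : 1.4 ≤ 4 * r * Real.log (4 / r) := by
  have hr : 0 < r := by linarith
  have hl2 := Real.log_two_gt_d9
  rcases le_total r (3/10) with h | h
  · have e : Real.log (4/r) = 5 * Real.log 2 + Real.log (1/(8*r)) := by
      rw [show (5:ℝ) * Real.log 2 = Real.log (2^5) by rw [Real.log_pow]; norm_num,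
        ← Real.log_mul (by positivity) (by positivity)]
      congr 1; field_simp; norm_num
    have h3 : 1 - (8*r) ≤ Real.log (1/(8*r)) := by
      have := Real.one_sub_inv_le_log_of_pos (x := 1/(8*r)) (by positivity)
      simpa using this
    have h4 : 4.46 - 8 * r ≤ Real.log (4/r) := by rw [e]; linarith
    have h5 : 4 * r * (4.46 - 8 * r) ≤ 4 * r * Real.log (4/r) := by gcongr
    nlinarith
  · have e : 3 * Real.log 2 ≤ Real.log (4/r) := by
      rw [show (3:ℝ) * Real.log 2 = Real.log (2^3) by rw [Real.log_pow]; norm_num]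
      apply Real.log_le_log (by positivity)
      rw [le_div_iff₀ hr]; linarith
    nlinarith

def Cl (u : ℂ → ℂ) (M : ℝ) : Prop :=
  Good u ∧ (∀ z ∈ ball (0:ℂ) 1, ‖lap u z‖ ≤ M) ∧
    ∀ z ∈ closedBall (0:ℂ) 1, ‖u z‖ ≤ M * ((1 - ‖z‖^2) / 4 + 1/1000)

lemma T_base {u : ℂ → ℂ} {M : ℝ} (hM : 0 < M) (hu : Cl u M) {z : ℂ} (h1 : 1/10 ≤ ‖z‖)
    (h2 : ‖z‖ ≤ 1/2) (e : ℂ) :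
    ‖fderiv ℝ u z e - fderiv ℝ u 0 e‖ ≤ 4 * M * ‖z‖ * Real.log (4 / ‖z‖) * ‖e‖ := by
  obtain ⟨hg, hl, hb⟩ := hu
  have a1 := grad_bound hg (ε := M * (1/1000)) (by positivity) hM.le hl
    (by
      intro w hw
      have := hb w (sphere_subset_closedBall hw)
      rw [show ‖w‖ = 1 by simpa using hw] at this
      refine this.trans (le_of_eq (by ring))) e
  set d := 1 - ‖z‖ with hd
  have hsub : closedBall z d ⊆ closedBall 0 1 := by
    apply closedBall_subset_closedBall'; simp [hd]
  have hsub' : ball z d ⊆ ball 0 1 := by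
    apply ball_subset_ball'; simp [hd]
  have hd0 : 1/2 ≤ d := by linarith
  have a2 := grad_G_scaled (a := z) (d := d) (by linarith) (hg.1.mono hsub)
    (fun w hw => hg.2 w (hsub' hw)) (S := M * (251/1000)) hM.le
    (by
      intro w hw
      refine (hb w (hsub (sphere_subset_closedBall hw))).trans ?_
      gcongr
      nlinarith [sq_nonneg ‖w‖])
    (fun w hw => hl w (hsub' hw)) e
  have h3 : 4 / Real.pi * (M * (251/1000)) / d + M * d / 2 ≤ 0.896 * M := by
    have i1 : 4 / Real.pi * (M * (251/1000)) / d ≤ 1.274 * (M * (251/1000)) / d := by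
      gcongr; exact inv_pi_lt.le
    refine (add_le_add_left i1 _).trans ?_
    have i2 : 1.274 * (251/1000) / d + d / 2 ≤ 0.896 := by
      rw [div_add' _ _ _ (by linarith), div_le_iff₀ (by linarith)]
      nlinarith
    calc _ = M * (1.274 * (251/1000) / d + d / 2) := by ring
      _ ≤ M * 0.896 := by gcongr
      _ = _ := by ring
  have h4 := log_base h1 h2
  calc _ ≤ ‖fderiv ℝ u z e‖ + ‖fderiv ℝ u 0 e‖ := norm_sub_le _ _
    _ ≤ 0.896 * M * ‖e‖ + (M / 2 + 3 * (M * (1/1000))) * ‖e‖ := by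
        apply add_le_add _ a1
        exact a2.trans (by gcongr)
    _ ≤ (M * 1.4) * ‖e‖ := by
        rw [← add_mul]; gcongr; linarith
    _ ≤ (M * (4 * ‖z‖ * Real.log (4 / ‖z‖))) * ‖e‖ := by gcongr
    _ = _ := by ring

lemma T_all (n : ℕ) : ∀ (u : ℂ → ℂ) (M : ℝ), 0 < M → Cl u M → ∀ z : ℂ, 1/10/2^n ≤ ‖z‖ →
    ‖z‖ ≤ 1/2 → ∀ e : ℂ,
    ‖fderiv ℝ u z e - fderiv ℝ u 0 e‖ ≤ 4 * M * ‖z‖ * Real.log (4 / ‖z‖) * ‖e‖ := by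
  induction n with
  | zero => intro u M hM hu z h1 h2 e; exact T_base hM hu (by simpa using h1) h2 e
  | succ n ih =>
    intro u M hM hu z h1 h2 e
    rcases le_or_gt (1/10) ‖z‖ with h | h
    · exact T_base hM hu h h2 e
    have hz0 : 0 < ‖z‖ := lt_of_lt_of_le (by positivity) h1
    obtain ⟨hg, hl, hb⟩ := hu
    have hm : ∀ w : ℂ, ‖0 + (1/2:ℂ) * w‖ = ‖w‖ / 2 := by intro w; simp; ring
    have hmb : ∀ w ∈ ball (0:ℂ) 1, 0 + (1/2:ℂ) * w ∈ ball (0:ℂ) 1 := by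
      intro w hw; rw [mem_ball_zero_iff, hm]; have : ‖w‖ < 1 := by simpa using hw
      linarith
    have hmc : ∀ w ∈ closedBall (0:ℂ) 1, 0 + (1/2:ℂ) * w ∈ closedBall (0:ℂ) 1 := by
      intro w hw; rw [mem_closedBall_zero_iff, hm]; have : ‖w‖ ≤ 1 := by simpa using hw
      linarith
    have hA := fun w hw => lap_aff (1/2:ℂ) 0 (hg.2 _ (hmb w hw))
    have hf : Good (fun w => u (0 + (1/2:ℂ) * w)) :=
      ⟨hg.1.comp (by fun_prop) hmc, fun w hw => (hA w hw).1⟩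
    obtain ⟨k, v, hv, hvl, -, hvb, hsum, -, hk⟩ := decomp2 hf (S := M * (3/16 + 1/1000))
      (M := M/4) (ε := M/4 * (1/1000)) (by positivity)
      (by
        intro w hw
        refine (hb _ (hmc w (sphere_subset_closedBall hw))).trans (le_of_eq ?_)
        rw [hm, show ‖w‖ = 1 by simpa using hw]; ring)
      (by
        intro w hw
        rw [(hA w hw).2.2, norm_mul, Complex.norm_real]
        have := hl _ (hmb w hw)
        have e1 : ‖‖(1/2:ℂ)‖^2‖ = 1/4 := by norm_num
        rw [e1]; linarith)
    have hcl : Cl v (M/4) := ⟨hv, hvl, fun w hw => (hvb w hw).trans (le_of_eq (by ring))⟩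
    have h2z : ‖2 * z‖ = 2 * ‖z‖ := by simp
    have h2zb : 2 * z ∈ ball (0:ℂ) 1 := by rw [mem_ball_zero_iff, h2z]; linarith
    have j1 := ih v (M/4) (by positivity) hcl (2*z)
      (by rw [h2z]; rw [pow_succ] at h1; have : (1:ℝ)/10/2^n = 2 * (1/10/(2^n*2)) := by field_simp
          linarith) (by rw [h2z]; linarith) e
    have j2 := hk (2*z) h2zb e
    have s1 := hsum (2*z) h2zb e
    have s0 := hsum 0 (by simp) e
    rw [(hA _ h2zb).2.1] at s1
    rw [(hA 0 (by simp)).2.1] at s0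
    have e1 : 0 + (1/2:ℂ) * (2 * z) = z := by ring
    have e2 : 0 + (1/2:ℂ) * 0 = 0 := by ring
    have e3 : (1/2:ℂ) * e = (1/2:ℝ) • e := by simp
    rw [e1, e3, map_smul] at s1
    rw [e2, e3, map_smul] at s0
    have hdiff : (1/2:ℝ) • (fderiv ℝ u z e - fderiv ℝ u 0 e) =
        (fderiv ℝ k (2*z) e - fderiv ℝ k 0 e) + (fderiv ℝ v (2*z) e - fderiv ℝ v 0 e) := by
      rw [smul_sub, s1, s0]; ring
    have hn := norm_add_le (fderiv ℝ k (2*z) e - fderiv ℝ k 0 e) (fderiv ℝ v (2*z) e - fderiv ℝ v 0 e)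
    rw [← hdiff, norm_smul] at hn
    have e4 : ‖(1/2:ℝ)‖ = 1/2 := by norm_num
    rw [e4] at hn
    rw [h2z] at j1 j2
    set r := ‖z‖ with hr
    have hlog : Real.log (4/(2*r)) = Real.log (4/r) - Real.log 2 := by
      rw [← Real.log_div (by positivity) (by norm_num)]; congr 1; field_simp
    rw [hlog] at j1
    have hHH : HH (2*r) ≤ 5.625 * r := by
      rw [HH, div_le_iff₀ (by have : 0 < 1 - 2*r := by linarith
                              positivity)]
      have : (2 - 2*r) * 2 ≤ 5.625 * (1-2*r)^2 := by nlinarith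
      nlinarith
    have hHH0 : 0 ≤ HH (2*r) := by
      rw [HH]; have : 0 ≤ 2 - 2*r := by linarith
      positivity
    have hc : 4 / Real.pi * (M * (3/16+1/1000) + M/4*(1/1000)) * HH (2*r) ≤ 2 * M * r * Real.log 2 := by
      have hl2 := Real.log_two_gt_d9
      calc _ ≤ 1.274 * (M * (3/16+1/1000) + M/4*(1/1000)) * (5.625 * r) := by
            gcongr; exact inv_pi_lt.le
        _ = (M * r) * (1.274 * (3/16+1/1000 + 1/4*(1/1000)) * 5.625) := by ring
        _ ≤ (M * r) * (2 * Real.log 2) := mul_le_mul_of_nonneg_left (by norm_num at hl2 ⊢; linarith) (by positivity)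
        _ = _ := by ring
    have hc' := mul_le_mul_of_nonneg_right hc (norm_nonneg e)
    have : ‖fderiv ℝ u z e - fderiv ℝ u 0 e‖ ≤
       2 * (2 * M * r * Real.log 2 * ‖e‖ +
         4 * (M/4) * (2*r) * (Real.log (4/r) - Real.log 2) * ‖e‖) := by linarith
    refine this.trans (le_of_eq ?_)
    ring

lemma T_fin {u : ℂ → ℂ} {M : ℝ} (hM : 0 < M) (hu : Cl u M) (z : ℂ) (hz : ‖z‖ ≤ 1/2) (e : ℂ) :
    ‖fderiv ℝ u z e - fderiv ℝ u 0 e‖ ≤ 4 * M * ‖z‖ * Real.log (4 / ‖z‖) * ‖e‖ := by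
  by_cases h : z = 0
  · simp [h]
  · have h0 : 0 < ‖z‖ := by positivity
    obtain ⟨n, hn⟩ := exists_pow_lt_of_lt_one (y := (1/2:ℝ)) h0 (by norm_num)
    refine T_all n u M hM hu z ?_ hz e
    rw [one_div_pow] at hn
    have : 1/10/2^n ≤ 1/(2:ℝ)^n := by gcongr; norm_num
    linarith

/-- Main derivative difference estimate. -/
lemma fdiff {f : ℂ → ℂ} (hf : Good f) {S M : ℝ} (hM0 : 0 ≤ M)
    (hS : ∀ z ∈ sphere (0:ℂ) 1, ‖f z‖ ≤ S) (hM : ∀ z ∈ ball (0:ℂ) 1, ‖lap f z‖ ≤ M)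
    (z : ℂ) (hz : ‖z‖ ≤ 1/2) (e : ℂ) :
    ‖fderiv ℝ f z e - fderiv ℝ f 0 e‖ ≤
      (4 / Real.pi * S * HH ‖z‖ + 4 * M * ‖z‖ * Real.log (4 / ‖z‖)) * ‖e‖ := by
  have hzb : z ∈ ball (0:ℂ) 1 := by rw [mem_ball_zero_iff]; linarith
  have key : ∀ ε : ℝ, 0 < ε → ‖fderiv ℝ f z e - fderiv ℝ f 0 e‖ ≤
      (4 / Real.pi * (S + ε) * HH ‖z‖ + 4 * (M + 1000 * ε) * ‖z‖ * Real.log (4 / ‖z‖)) * ‖e‖ := by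
    intro ε hε
    obtain ⟨h, v, h1, h2, h3, h4, h5, h6, h7⟩ := decomp2 hf hε hS hM
    have hcl : Cl v (M + 1000 * ε) := by
      refine ⟨h1, fun w hw => (h2 w hw).trans (by linarith), fun w hw => (h4 w hw).trans ?_⟩
      have : ‖w‖^2 ≤ 1 := pow_le_one₀ (norm_nonneg w) (by simpa using hw)
      nlinarith
    have j1 := T_fin (by positivity) hcl z hz e
    have j2 := h7 z hzb e
    rw [h5 z hzb, h5 0 (by simp), add_sub_add_comm, add_mul]
    exact (norm_add_le _ _).trans (add_le_add j2 j1)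
  have ht : Tendsto (fun ε : ℝ => (4 / Real.pi * (S + ε) * HH ‖z‖ + 4 * (M + 1000 * ε) * ‖z‖ * Real.log (4 / ‖z‖)) * ‖e‖)
      (nhdsWithin 0 (Ioi 0)) (nhds ((4 / Real.pi * S * HH ‖z‖ + 4 * M * ‖z‖ * Real.log (4 / ‖z‖)) * ‖e‖)) := by
    have : Continuous (fun ε : ℝ => (4 / Real.pi * (S + ε) * HH ‖z‖ + 4 * (M + 1000 * ε) * ‖z‖ * Real.log (4 / ‖z‖)) * ‖e‖) := by fun_prop
    have := this.tendsto 0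
    simp only [add_zero, mul_zero] at this
    exact this.mono_left nhdsWithin_le_nhds
  exact ge_of_tendsto ht (by filter_upwards [self_mem_nhdsWithin] with ε hε using key ε hε)


lemma lin_low (L : ℂ →L[ℝ] ℂ) (a b : ℂ) (ha : a = (L 1 - Complex.I * L Complex.I)/2)
    (hb : b = (L 1 + Complex.I * L Complex.I)/2) (Λ : ℝ) (hup : ∀ e, ‖L e‖ ≤ Λ * ‖e‖)
    (hJ : ‖a‖^2 - ‖b‖^2 = 1) : 1 ≤ Λ ∧ ∀ e, 1/Λ * ‖e‖ ≤ ‖L e‖ := by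
  have hL : ∀ e, L e = a * e + b * (starRingEnd ℂ) e := by
    intro e
    have h1 : e = e.re • (1:ℂ) + e.im • Complex.I := by simp
    have h2 : L e = e.re • L 1 + e.im • L Complex.I := by
      conv_lhs => rw [h1]
      rw [map_add, map_smul, map_smul]
    have h3 : (starRingEnd ℂ) e = e.re - e.im * Complex.I := by
      apply Complex.ext <;> simp
    have h4 : e = e.re + e.im * Complex.I := by simp
    rw [h2, h3]
    conv_rhs => rw [h4]
    rw [ha, hb]
    simp only [Complex.real_smul, Complex.add_re, Complex.add_im, Complex.ofReal_re, Complex.ofReal_im, Complex.mul_re, Complex.mul_im, Complex.I_re, Complex.I_im]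
    ring_nf
    simp only [Complex.I_sq]
    ring
  have hsum : ‖a‖ + ‖b‖ ≤ Λ := by
    by_cases hb0 : b = 0
    · have := hup 1
      rw [hL] at this
      simpa [hb0] using this
    have hb' : 0 < ‖b‖ := norm_pos_iff.2 hb0
    have ha' : 0 < ‖a‖ := by
      by_contra h
      have : ‖a‖ = 0 := le_antisymm (not_lt.1 h) (norm_nonneg _)
      rw [this] at hJ; nlinarith
    obtain ⟨e, he⟩ := IsAlgClosed.exists_pow_nat_eq ((starRingEnd ℂ) a * b) (n := 2) (by norm_num)
    have hen : ‖e‖^2 = ‖a‖ * ‖b‖ := by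
      rw [← norm_pow, he, norm_mul, RCLike.norm_conj]
    have h1 : L e * e = b * ((‖a‖^2 + ‖a‖*‖b‖ : ℝ) : ℂ) := by
      have c1 : (starRingEnd ℂ) e * e = ((‖e‖^2 : ℝ) : ℂ) := by
        rw [Complex.conj_mul']; push_cast; rfl
      have c2 : a * (starRingEnd ℂ) a = ((‖a‖^2 : ℝ) : ℂ) := by
        rw [Complex.mul_conj']; push_cast; rfl
      rw [hen] at c1
      rw [hL]
      calc _ = a * e^2 + b * ((starRingEnd ℂ) e * e) := by ring
        _ = (a * (starRingEnd ℂ) a) * b + b * ((starRingEnd ℂ) e * e) := by rw [he]; ring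
        _ = _ := by rw [c1, c2]; push_cast; ring
    have h2 := congrArg norm h1
    rw [norm_mul, norm_mul, Complex.norm_real, Real.norm_of_nonneg (by positivity)] at h2
    have h3 := mul_le_mul_of_nonneg_right (hup e) (norm_nonneg e)
    have h4 : (‖a‖+‖b‖) * (‖a‖*‖b‖) ≤ Λ * (‖a‖*‖b‖) := by
      rw [← hen] ; nlinarith
    exact le_of_mul_le_mul_right h4 (by positivity)
  have hna := norm_nonneg a
  have hnb := norm_nonneg b
  have ha1 : 1 ≤ ‖a‖ := by nlinarith
  have hΛ : 1 ≤ Λ := by linarith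
  refine ⟨hΛ, fun e => ?_⟩
  have hd : 1/Λ ≤ ‖a‖ - ‖b‖ := by
    rw [div_le_iff₀ (by linarith)]
    have : 0 ≤ ‖a‖ - ‖b‖ := by nlinarith
    nlinarith
  have : ‖a*e‖ - ‖b * (starRingEnd ℂ) e‖ ≤ ‖L e‖ := by
    rw [hL]
    have := norm_sub_norm_le (a*e) (-(b * (starRingEnd ℂ) e))
    rw [norm_neg, sub_neg_eq_add] at this
    exact this
  rw [norm_mul, norm_mul, RCLike.norm_conj] at this
  have := mul_le_mul_of_nonneg_right hd (norm_nonneg e)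
  linarith

lemma cover_inj {f : ℂ → ℂ} {r A B : ℝ} (hr : 0 < r) (hA : 0 < A) (hB : 0 ≤ B)
    (hd : ∀ z ∈ closedBall (0:ℂ) r, ContDiffAt ℝ 2 f z) (h0 : f 0 = 0)
    (hlow : ∀ e, (A+B)*‖e‖ ≤ ‖fderiv ℝ f 0 e‖)
    (hdif : ∀ z : ℂ, ‖z‖ ≤ r → ∀ e, ‖fderiv ℝ f z e - fderiv ℝ f 0 e‖ ≤ (A*(‖z‖/r)+B)*‖e‖) :
    InjOn f (ball (0:ℂ) r) ∧ ball (0:ℂ) (A*r/2) ⊆ f '' ball (0:ℂ) r := by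
  have hdd : ∀ z ∈ closedBall (0:ℂ) r, DifferentiableAt ℝ f z := fun z hz => c2_diff (hd z hz)
  have hfc : ContinuousOn f (closedBall (0:ℂ) r) :=
    fun z hz => (hdd z hz).continuousAt.continuousWithinAt
  constructor
  · intro x hx y hy hxy
    rw [mem_ball_zero_iff] at hx hy
    by_contra hne
    set ρ := max ‖x‖ ‖y‖ with hρ
    have hρr : ρ < r := max_lt hx hy
    have hρ0 : 0 ≤ ρ := (norm_nonneg x).trans (le_max_left _ _)
    have key := (convex_closedBall (0:ℂ) ρ).norm_image_sub_le_of_norm_fderiv_le' (𝕜 := ℝ) (f := f)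
      (φ := fderiv ℝ f 0) (C := A*(ρ/r)+B) (x := x) (y := y)
      (fun z hz => hdd z (closedBall_subset_closedBall hρr.le hz))
      (fun z hz => by
        rw [mem_closedBall_zero_iff] at hz
        refine ContinuousLinearMap.opNorm_le_bound _ (by positivity) (fun e => ?_)
        refine (hdif z (hz.trans hρr.le) e).trans ?_
        gcongr)
      (by simp [hρ]) (by simp [hρ])
    rw [hxy, sub_self, zero_sub, norm_neg] at key
    have h1 := hlow (y - x)
    have h2 : 0 < ‖y - x‖ := norm_pos_iff.2 (sub_ne_zero.2 (Ne.symm hne))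
    have h3 := le_of_mul_le_mul_right (h1.trans key) h2
    have h4 : ρ / r < 1 := (div_lt_one hr).2 hρr
    nlinarith
  · -- boundary values
    have hbd : ∀ z : ℂ, ‖z‖ = r → A*r/2 ≤ ‖f z‖ := by
      intro z hz
      have key : ‖f ((1:ℝ) • z) - (1:ℝ) • fderiv ℝ f 0 z‖ ≤ A*r*(1:ℝ)^2/2 + B*r*1 := by
        refine image_norm_le_of_norm_deriv_right_le_deriv_boundary'
          (f := fun t : ℝ => f (t • z) - t • fderiv ℝ f 0 z)
          (f' := fun t : ℝ => fderiv ℝ f (t • z) z - fderiv ℝ f 0 z) (a := 0) (b := 1)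
          (B := fun t : ℝ => A*r*t^2/2 + B*r*t) (B' := fun t : ℝ => A*r*t + B*r) ?_ ?_ ?_ ?_ ?_ ?_
          (show (1:ℝ) ∈ Icc (0:ℝ) 1 by simp)
        · have : ∀ t ∈ Icc (0:ℝ) 1, t • z ∈ closedBall (0:ℂ) r := by
            intro t ht
            rw [mem_closedBall_zero_iff, norm_smul, hz, Real.norm_of_nonneg ht.1]
            nlinarith [ht.2]
          refine ContinuousOn.sub (hfc.comp (by fun_prop) this) (by fun_prop)
        · intro t ht
          have hm : t • z ∈ closedBall (0:ℂ) r := by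
            rw [mem_closedBall_zero_iff, norm_smul, hz, Real.norm_of_nonneg ht.1]
            nlinarith [ht.2]
          have i1 : HasDerivAt (fun t : ℝ => t • z) z t := by
            simpa using (hasDerivAt_id t).smul_const z
          have i2 : HasDerivAt (fun t : ℝ => t • fderiv ℝ f 0 z) (fderiv ℝ f 0 z) t := by
            simpa using (hasDerivAt_id t).smul_const (fderiv ℝ f 0 z)
          have i3 : HasDerivAt (fun t : ℝ => f (t • z)) (fderiv ℝ f (t • z) z) t :=
            (hdd _ hm).hasFDerivAt.comp_hasDerivAt t i1
          exact (i3.sub i2).hasDerivWithinAt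
        · simp [h0]
        · fun_prop
        · intro t ht
          have : HasDerivAt (fun t : ℝ => A*r*t^2/2 + B*r*t) (A*r*t + B*r) t := by
            have i1 := ((hasDerivAt_pow 2 t).const_mul (A*r)).div_const 2
            have i2 := (hasDerivAt_id t).const_mul (B*r)
            exact (i1.add i2).congr_deriv (by norm_num; ring)
          exact this.hasDerivWithinAt
        · intro t ht
          have hn : ‖t • z‖ = t * r := by rw [norm_smul, hz, Real.norm_of_nonneg ht.1]
          have := hdif (t • z) (by rw [hn]; nlinarith [ht.2]) z
          rw [hn, hz, mul_div_assoc, div_self hr.ne'] at this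
          refine this.trans (le_of_eq (by ring))
      rw [one_smul, one_smul] at key
      have h1 := hlow z
      rw [hz] at h1
      have h2 := norm_sub_norm_le (fderiv ℝ f 0 z) (f z)
      rw [norm_sub_rev] at h2
      nlinarith
    have hopen : IsOpen (f '' ball (0:ℂ) r) := by
      rw [isOpen_iff_mem_nhds]
      rintro _ ⟨z, hz, rfl⟩
      have hzc := ball_subset_closedBall hz
      rw [mem_ball_zero_iff] at hz
      have hs : HasStrictFDerivAt f (fderiv ℝ f z) z := (hd z hzc).hasStrictFDerivAt (by norm_num)
      have hinj : Function.Injective (fderiv ℝ f z) := by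
        rw [injective_iff_map_eq_zero]
        intro e he
        have h1 := hdif z hz.le e
        rw [he, zero_sub, norm_neg] at h1
        have h2 := (hlow e).trans h1
        by_contra hne
        have h3 := le_of_mul_le_mul_right h2 (norm_pos_iff.2 hne)
        have h4 : ‖z‖ / r < 1 := (div_lt_one hr).2 hz
        nlinarith
      have hsurj : Function.Surjective (fderiv ℝ f z) :=
        LinearMap.surjective_of_injective (f := (fderiv ℝ f z : ℂ →ₗ[ℝ] ℂ)) hinj
      rw [← hs.map_nhds_eq_of_surj (LinearMap.range_eq_top.2 hsurj)]
      exact image_mem_map (isOpen_ball.mem_nhds (by simpa using hz))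
    have hcpt : IsClosed (f '' closedBall (0:ℂ) r) :=
      ((isCompact_closedBall (0:ℂ) r).image_of_continuousOn hfc).isClosed
    have hpre : IsPreconnected (ball (0:ℂ) (A*r/2)) := (convex_ball _ _).isPreconnected
    refine hpre.subset_left_of_subset_union hopen hcpt.isOpen_compl ?_ ?_ ?_
    · exact disjoint_compl_right.mono_left (image_mono ball_subset_closedBall)
    · intro w hw
      by_cases h : w ∈ f '' closedBall (0:ℂ) r
      · left
        obtain ⟨z, hz, rfl⟩ := h
        refine ⟨z, ?_, rfl⟩
        rw [mem_closedBall_zero_iff] at hz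
        rw [mem_ball_zero_iff] at hw ⊢
        refine lt_of_le_of_ne hz (fun h => ?_)
        exact absurd (hbd z h) (not_le.2 hw)
      · right; exact h
    · exact ⟨0, by simp; positivity, 0, by simpa using hr, h0⟩


lemma HH_mono {r R : ℝ} (h0 : 0 ≤ r) (h : r ≤ R) (hR : 0 < R) (hR1 : R < 1) : HH r ≤ HH R * (r/R) := by
  have e : HH R * (r/R) = r * (2-R)/(1-R)^2 := by
    rw [HH]; field_simp
  rw [e, HH, div_le_div_iff₀ (by have : 0 < 1 - r := by linarith
                                 positivity) (by have : 0 < 1 - R := by linarith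
                                                 positivity)]
  have : (2-r)*(1-R)^2 ≤ (2-R)*(1-r)^2 := by
    have : (2-R)*(1-r)^2 - (2-r)*(1-R)^2 = (R-r)*((1-r)*(1-R) + (1-r) + (1-R)) := by ring
    have h3 : 0 ≤ (R-r)*((1-r)*(1-R) + (1-r) + (1-R)) := by
      have a1 : 0 ≤ R - r := by linarith
      have a2 : 0 ≤ 1 - r := by linarith
      have a3 : 0 ≤ 1 - R := by linarith
      positivity
    linarith
  nlinarith

lemma rlog_mono {r R : ℝ} (h0 : 0 ≤ r) (h : r ≤ R) (hR : 0 < R) (hR1 : R ≤ 1/2) :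
    r * Real.log (4/r) ≤ R * Real.log (4/R) := by
  have hl : 1 ≤ Real.log (4/R) := by
    have : Real.log 8 ≤ Real.log (4/R) := Real.log_le_log (by norm_num) (by
      rw [le_div_iff₀ hR]; linarith)
    have h8 : Real.log 8 = 3 * Real.log 2 := by
      rw [show (8:ℝ) = 2^3 by norm_num, Real.log_pow]; norm_num
    have := Real.log_two_gt_d9
    linarith
  rcases h0.eq_or_lt with rfl | h0
  · simp; positivity
  have e : Real.log (4/r) = Real.log (4/R) + Real.log (R/r) := by
    rw [← Real.log_mul (by positivity) (by positivity)]; congr 1; field_simp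
  have h2 := Real.log_le_sub_one_of_pos (show 0 < R/r by positivity)
  have h3 : r * Real.log (R/r) ≤ R - r := by
    have := mul_le_mul_of_nonneg_left h2 h0.le
    have e2 : r * (R/r - 1) = R - r := by field_simp
    linarith
  rw [e]; nlinarith

/-- Landau type theorem for solutions of the Poisson equation (Theorem 1.8). -/
theorem stmt15 (M₁ M₂ : ℝ) (hM₁ : 0 ≤ M₁) (hM₂ : 0 < M₂) (g f : ℂ → ℂ)
    (hg : ContinuousOn g (closedBall (0:ℂ) 1))
    (hf2 : ContDiffOn ℝ 2 f (ball (0:ℂ) 1))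
    (hfc : ContinuousOn f (closedBall (0:ℂ) 1))
    (hfg : ∀ z ∈ ball (0:ℂ) 1, lap f z = g z)
    (hf0 : f 0 = 0)
    (hJ : ‖wdz f 0‖ ^ 2 - ‖wdzbar f 0‖ ^ 2 = 1)
    (hgb : ∀ z ∈ ball (0:ℂ) 1, ‖g z‖ ≤ M₁)
    (hfb : ∀ z ∈ ball (0:ℂ) 1, ‖f z‖ ≤ M₂)
    (r₀ : ℝ) (hr₀ : r₀ ∈ Set.Ioo (0:ℝ) 1)
    (heq : 1 / (4 / Real.pi * M₂ + 2 / 3 * M₁) -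
        4 * M₂ / Real.pi * (r₀ * (2 - r₀) / (1 - r₀) ^ 2) -
        2 * M₁ * (Real.log (4 * (1 + r₀)) - Real.log r₀) * ((2 + r₀) * r₀) = 0) :
    Set.InjOn f (ball (0:ℂ) r₀) ∧
    ∃ R₀ : ℝ, R₀ ≥ 2 * M₂ / Real.pi * (r₀ ^ 2 * (2 - r₀) / (1 - r₀) ^ 2) ∧
      ball (0:ℂ) R₀ ⊆ f '' ball (0:ℂ) r₀ := by
  obtain ⟨hr, hr1⟩ := hr₀
  have hG : Good f := ⟨hfc, fun z hz => hf2.contDiffAt (isOpen_ball.mem_nhds hz)⟩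
  have hM : ∀ z ∈ ball (0:ℂ) 1, ‖lap f z‖ ≤ M₁ := fun z hz => by rw [hfg z hz]; exact hgb z hz
  have hS : ∀ z ∈ sphere (0:ℂ) 1, ‖f z‖ ≤ M₂ := by
    intro z hz
    have hcl : closure (ball (0:ℂ) 1) = closedBall 0 1 := closure_ball _ one_ne_zero
    have hz' : z ∈ closure (ball (0:ℂ) 1) := by rw [hcl]; exact sphere_subset_closedBall hz
    have hc : ContinuousOn (fun z => ‖f z‖) (closure (ball (0:ℂ) 1)) := by rw [hcl]; exact hfc.norm
    exact le_on_closure (f := fun z => ‖f z‖) (g := fun _ => M₂) hfb hc continuousOn_const hz'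
  have hpi := Real.pi_pos
  set Λ := 4 / Real.pi * M₂ + 2 / 3 * M₁ with hΛ
  have hlin := lin_low (fderiv ℝ f 0) (wdz f 0) (wdzbar f 0) rfl rfl Λ (fun e => by
    refine (grad_G hG hM₁ hS hM e).trans ?_
    gcongr
    linarith) hJ
  obtain ⟨hΛ1, hlow⟩ := hlin
  set A := 4 * M₂ / Real.pi * (r₀ * (2 - r₀) / (1 - r₀) ^ 2) with hA
  set B := 2 * M₁ * (Real.log (4 * (1 + r₀)) - Real.log r₀) * ((2 + r₀) * r₀) with hB
  have hAB : 1/Λ = A + B := by linarith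
  have hAB1 : A + B ≤ 1 := by
    rw [← hAB, div_le_one (by linarith)]; exact hΛ1
  have hlogd : Real.log (4 * (1 + r₀)) - Real.log r₀ = Real.log (4 * (1+r₀)/r₀) := by
    rw [Real.log_div (by positivity) hr.ne']
  have hl8 : 2.07 ≤ Real.log (4 * (1+r₀)/r₀) := by
    have : Real.log 8 ≤ Real.log (4 * (1+r₀)/r₀) := Real.log_le_log (by norm_num) (by
      rw [le_div_iff₀ hr]; linarith)
    have h8 : Real.log 8 = 3 * Real.log 2 := by
      rw [show (8:ℝ) = 2^3 by norm_num, Real.log_pow]; norm_num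
    have := Real.log_two_gt_d9
    linarith
  rw [hlogd] at hB
  have h1r : 0 < 1 - r₀ := by linarith
  have h2r : 0 < 2 - r₀ := by linarith
  have hA0 : 0 < A := by rw [hA]; positivity
  have hlp : 0 ≤ Real.log (4 * (1+r₀)/r₀) := by linarith
  have hB0 : 0 ≤ B := by rw [hB]; positivity
  have hA' : A = 4 / Real.pi * M₂ * HH r₀ := by rw [hA, HH]; ring
  have hhalf : r₀ ≤ 1/2 := by
    by_contra hcon
    have hcon : 1/2 < r₀ := not_le.1 hcon
    have hH3 : 3 ≤ HH r₀ := by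
      rw [HH, le_div_iff₀ (by positivity)]; nlinarith
    by_cases hm : 3/4 ≤ M₁
    · have : 2 * (3/4) * 2.07 * ((2 + 1/2) * (1/2)) ≤ B := by
        rw [hB]; gcongr
      norm_num at this; linarith
    · have h4 : 1/2 ≤ 4 / Real.pi * M₂ := by linarith
      have : 1/2 * 3 ≤ A := by rw [hA']; gcongr
      linarith
  have hmain := cover_inj (f := f) hr hA0 hB0
    (fun z hz => hG.2 z (by rw [mem_closedBall_zero_iff] at hz; rw [mem_ball_zero_iff]; linarith))
    hf0 (fun e => by rw [← hAB]; exact hlow e) (fun z hz e => by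
      refine (fdiff hG hM₁ hS hM z (hz.trans hhalf) e).trans ?_
      refine mul_le_mul_of_nonneg_right ?_ (norm_nonneg e)
      have k1 : 4/Real.pi * M₂ * HH ‖z‖ ≤ A * (‖z‖/r₀) := by
        rw [hA', mul_assoc]
        have := HH_mono (norm_nonneg z) hz hr hr1
        rw [mul_assoc, mul_assoc]
        gcongr
      have k2 : 4 * M₁ * ‖z‖ * Real.log (4/‖z‖) ≤ B := by
        have j1 := rlog_mono (norm_nonneg z) hz hr hhalf
        have j2 : Real.log (4/r₀) ≤ Real.log (4*(1+r₀)/r₀) :=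
          Real.log_le_log (by positivity) (by gcongr; linarith)
        calc 4 * M₁ * ‖z‖ * Real.log (4/‖z‖) = 4 * M₁ * (‖z‖ * Real.log (4/‖z‖)) := by ring
          _ ≤ 4 * M₁ * (r₀ * Real.log (4/r₀)) := by gcongr
          _ ≤ 4 * M₁ * (r₀ * Real.log (4*(1+r₀)/r₀)) := by gcongr
          _ = 2 * M₁ * Real.log (4*(1+r₀)/r₀) * ((2 + 0) * r₀) := by ring
          _ ≤ B := by rw [hB]; gcongr
      linarith)
  refine ⟨hmain.1, A * r₀ / 2, le_of_eq ?_, hmain.2⟩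
  rw [hA]; ring
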